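/- Let n ≥ 1 and let M be a subset of the edge set of the complete graph K_n such that the spanning subgraph of K_n with edge set M is a forest with c components (including isolated vertices) whose orders are n_1, n_2, ..., n_c. Then the number of spanning trees of K_n containing every edge of M equals n^{c-2} · n_1 · n_2 · ... · n_c. -/

import Mathlib

/-!
Spanning trees of multigraphs: common definitions.

A multigraph on a vertex type `V` with edge type `E` is given by an incidence
map `inc : E → Sym2 V` sending each edge to its (unordered) pair of endpoints.
-/

namespace PaperST

universe u v

/-- A multigraph on vertex type `V` with edge type `E`. -/
structure Multigraph (V : Type u) (E : Type v) where
  /-- the two (possibly equal) endpoints of each edge -/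
  inc : E → Sym2 V

namespace Multigraph

variable {V : Type u} {E : Type v}

/-- One step along an edge of `T`. -/
def Step (G : Multigraph V E) (T : Set E) (u v : V) : Prop :=
  ∃ e ∈ T, G.inc e = s(u, v)

theorem step_symm (G : Multigraph V E) (T : Set E) : Symmetric (G.Step T) := by
  rintro u v ⟨e, he, hinc⟩
  exact ⟨e, he, by rw [hinc]; exact Sym2.eq_swap⟩

/-- Reachability using only edges in `T`. -/
def Reach (G : Multigraph V E) (T : Set E) : V → V → Prop :=
  Relation.ReflTransGen (G.Step T)

/-- The spanning subgraph `G⟨T⟩` is connected. -/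
def ConnectedOn (G : Multigraph V E) (T : Set E) : Prop :=
  ∀ u v : V, G.Reach T u v

/-- `G` is connected. -/
def Connected (G : Multigraph V E) : Prop :=
  G.ConnectedOn Set.univ

/-- `G` has no loops. -/
def Loopless (G : Multigraph V E) : Prop :=
  ∀ e : E, ¬ (G.inc e).IsDiag

/-- A spanning tree of a (finite) multigraph: a connected spanning subgraph
with `|V| - 1` edges. -/
def IsSpanningTree (G : Multigraph V E) (T : Set E) : Prop :=
  G.ConnectedOn T ∧ T.ncard + 1 = Nat.card V

/-- The set `ST_G(M)` of spanning trees of `G` containing all edges of `M`. -/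
def ST (G : Multigraph V E) (M : Set E) : Set (Set E) :=
  {T | G.IsSpanningTree T ∧ M ⊆ T}

/-- `τ_G(M)`: the number of spanning trees of `G` containing all edges of `M`. -/
noncomputable def tau (G : Multigraph V E) (M : Set E) : ℕ :=
  (G.ST M).ncard

/-- The spanning subgraph `G⟨W⟩` is a forest (no cycles): there are no loops in
`W` and every edge of `W` is a bridge of `G⟨W⟩`. -/
def IsForest (G : Multigraph V E) (W : Set E) : Prop :=
  ∀ e ∈ W, ¬ (G.inc e).IsDiag ∧
    ∀ u v : V, G.inc e = s(u, v) → ¬ G.Reach (W \ {e}) u v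

/-- Edges with all endpoints in `U`: the edge set of the induced subgraph `G[U]`. -/
def edgesWithin (G : Multigraph V E) (U : Set V) : Set E :=
  {e | ∀ v ∈ G.inc e, v ∈ U}

/-- `E_G(U₁, U₂)`: edges with one end in `U₁` and the other end in `U₂`. -/
def edgesBetween (G : Multigraph V E) (U₁ U₂ : Set V) : Set E :=
  {e | ∃ u v, G.inc e = s(u, v) ∧ u ∈ U₁ ∧ v ∈ U₂}

/-- `E_G(U) = E_G(U, V − U)`: edges with one end in `U` and the other outside. -/
def edgeBoundary (G : Multigraph V E) (U : Set V) : Set E :=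
  G.edgesBetween U Uᶜ

/-- `U` is a clique of `G`: the induced subgraph `G[U]` is a complete graph,
i.e. exactly one edge joins each pair of distinct vertices of `U`, and there
are neither loops nor parallel edges inside `U`. -/
def IsClique (G : Multigraph V E) (U : Set V) : Prop :=
  (∀ u ∈ U, ∀ v ∈ U, u ≠ v → ∃! e : E, G.inc e = s(u, v)) ∧
    ∀ e ∈ G.edgesWithin U, ¬ (G.inc e).IsDiag

/-- The degree of a vertex: the number of edges incident with it. -/
noncomputable def degree (G : Multigraph V E) (v : V) : ℕ :=
  {e : E | v ∈ G.inc e}.ncard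

/-- The vertices incident with some edge of `W`: the vertex set of `G[W]`. -/
def supp (G : Multigraph V E) (W : Set E) : Set V :=
  {v | ∃ e ∈ W, v ∈ G.inc e}

/-- Edges `e` and `f` lie in the same component of `G[W]`. -/
def EdgeConn (G : Multigraph V E) (W : Set E) (e f : E) : Prop :=
  ∃ u v : V, u ∈ G.inc e ∧ v ∈ G.inc f ∧ G.Reach W u v

/-- Every component of `G[W]` is a star whose center lies in `C`. -/
def StarComponents (G : Multigraph V E) (W : Set E) (C : Set V) : Prop :=
  ∀ e ∈ W, ∃ w ∈ C, ∀ f ∈ W, G.EdgeConn W e f →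
    (w ∈ G.inc f ∧ ¬ (G.inc f).IsDiag ∧
      ∀ g ∈ W, G.EdgeConn W e g → G.inc g = G.inc f → g = f)

/-- The setoid on `V` identifying the vertices connected by edges of `W`. -/
def contractSetoid (G : Multigraph V E) (W : Set E) : Setoid V where
  r := G.Reach W
  iseqv := ⟨fun _ => Relation.ReflTransGen.refl,
    fun h =>
      haveI : Std.Symm (G.Step W) := ⟨fun _ _ h' => G.step_symm W h'⟩
      Relation.ReflTransGen.symmetric.symm _ _ h,
    fun h h' => Relation.ReflTransGen.trans h h'⟩

/-- The contraction `G/W` of the edges in `W`. -/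
def contract (G : Multigraph V E) (W : Set E) :
    Multigraph (Quotient (G.contractSetoid W)) {e : E // e ∉ W} :=
  ⟨fun e => (G.inc e.val).map (Quotient.mk (G.contractSetoid W))⟩

/-- Deletion `G − D` of the edges in `D`. -/
def deleteEdges (G : Multigraph V E) (D : Set E) : Multigraph V {e : E // e ∉ D} :=
  ⟨fun e => G.inc e.val⟩

/-- The closed neighbourhood `N_G[S]`. -/
def closedNbhd (G : Multigraph V E) (S : Set V) : Set V :=
  S ∪ {v | ∃ u ∈ S, ∃ e : E, G.inc e = s(u, v)}

/-- The induced subgraph `G[A]`, described using a choice `ends` of the pair of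
endpoints of each edge. -/
def induce (G : Multigraph V E) (A : Set V) (ends : E → V × V)
    (hends : ∀ e, G.inc e = s((ends e).1, (ends e).2)) :
    Multigraph A {e : E // e ∈ G.edgesWithin A} :=
  ⟨fun e => s(⟨(ends e.val).1, e.prop _ (by rw [hends]; exact Sym2.mem_mk_left _ _)⟩,
              ⟨(ends e.val).2, e.prop _ (by rw [hends]; exact Sym2.mem_mk_right _ _)⟩)⟩

end Multigraph


open Multigraph

/-- The complete graph `K_n`: one edge for each non-diagonal unordered pair. -/
def completeGraph (n : ℕ) : Multigraph (Fin n) {p : Sym2 (Fin n) // ¬ p.IsDiag} :=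
  ⟨Subtype.val⟩

/-!
Write `c` for the number of components of `M` and `n₁, …, n_c` for their orders. Every spanning
tree containing `M` has exactly `c - 1` edges outside `M`, and these join different components of
`M`. Counting pairs (tree, edge outside `M`) in two ways gives

  `(c - 1) τ(M) = ∑ₑ τ(M ∪ {e})`,  `e` running over the edges joining different components.

If `e` joins components of orders `a` and `b`, then by induction on `c` the summand is
`n^{c-3} (∏ᵢ nᵢ) (1/a + 1/b)`. In the complete graph a vertex in a component of order `a` lies on
`n - a` such edges, so regrouping by vertices the sum of the factors `1/a + 1/b` is
`∑_w (n - a_w) / a_w = n c - n = n (c - 1)`.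
-/

section Labels

variable {V ι : Type*}

theorem card_subtype_ne_add_one [Finite ι] (j : ι) :
    Nat.card {i // i ≠ j} + 1 = Nat.card ι := by
  classical
  rw [← Finite.card_option, Nat.card_congr (Equiv.optionSubtypeNe j)]

/-- The number of vertices labelled `i`: the order of the component `i` when `comp` labels
components. -/
noncomputable def fiberCard (comp : V → ι) (i : ι) : ℕ :=
  {v | comp v = i}.ncard

theorem fiberCard_apply_pos [Finite V] (comp : V → ι) (v : V) : 0 < fiberCard comp (comp v) :=
  (Set.ncard_pos (Set.toFinite _)).2 ⟨v, rfl⟩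

theorem ncard_ne_add_fiberCard [Finite V] (comp : V → ι) (i : ι) :
    {v | comp v ≠ i}.ncard + fiberCard comp i = Nat.card V := by
  rw [add_comm]
  exact Set.ncard_add_ncard_compl {v | comp v = i}

theorem sum_inv_fiberCard [Fintype V] [Fintype ι] {comp : V → ι}
    (hsurj : Function.Surjective comp) :
    ∑ w, (fiberCard comp (comp w) : ℚ)⁻¹ = Fintype.card ι := by
  classical
  have fiber_sum (i : ι) : ∑ w with comp w = i, (fiberCard comp (comp w) : ℚ)⁻¹ = 1 := by
    obtain ⟨v, rfl⟩ := hsurj i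
    have hpos := fiberCard_apply_pos comp v
    have hcard : Finset.card {w | comp w = comp v} = fiberCard comp (comp v) := by
      rw [fiberCard, Set.ncard_eq_toFinset_card', Set.toFinset_ofPred]
    rw [Finset.sum_congr rfl fun w hw => by rw [(Finset.mem_filter.1 hw).2],
      Finset.sum_const, hcard, nsmul_eq_mul]
    field_simp
  rw [← Finset.sum_fiberwise Finset.univ comp, Finset.sum_congr rfl fun i _ => fiber_sum i]
  simp

variable [DecidableEq ι] {j : ι} (i : {i // i ≠ j})

/-- The map on labels replacing `j` by `i` and fixing all others. Composing a labelling of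
components with it merges the components `i` and `j`. -/
def redirect (k : ι) : {i // i ≠ j} :=
  if hk : k = j then i else ⟨k, hk⟩

theorem redirect_coe (k : {i // i ≠ j}) : redirect i k = k :=
  dif_neg k.2

theorem redirect_eq_iff (k : ι) (l : {i // i ≠ j}) :
    redirect i k = l ↔ k = l ∨ k = j ∧ l = i := by
  unfold redirect
  split_ifs with hk <;> grind

theorem fiberCard_redirect_self [Finite V] (comp : V → ι) :
    fiberCard (redirect i ∘ comp) i = fiberCard comp i + fiberCard comp j := by
  have hunion : {v | (redirect i ∘ comp) v = i} = {v | comp v = i} ∪ {v | comp v = j} := by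
    ext v
    simp [redirect_eq_iff]
  rw [fiberCard, hunion, Set.ncard_union_eq]
  · rfl
  · exact Set.disjoint_left.2 fun v hvi hvj => i.2 (hvi.symm.trans hvj)

theorem fiberCard_redirect_of_ne (comp : V → ι) {k : {i // i ≠ j}} (hk : k ≠ i) :
    fiberCard (redirect i ∘ comp) k = fiberCard comp k := by
  simp [fiberCard, redirect_eq_iff, hk]

theorem prod_fiberCard_redirect [Finite V] [Fintype ι] (comp : V → ι)
    (hi : fiberCard comp i ≠ 0) (hj : fiberCard comp j ≠ 0) :
    ∏ k, (fiberCard (redirect i ∘ comp) k : ℚ) =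
      (∏ k, (fiberCard comp k : ℚ)) * ((fiberCard comp i : ℚ)⁻¹ + (fiberCard comp j : ℚ)⁻¹) := by
  have others : ∏ k : {k // k ≠ i}, (fiberCard (redirect i ∘ comp) k : ℚ) =
      ∏ k : {k // k ≠ i}, (fiberCard comp k : ℚ) :=
    Finset.prod_congr rfl fun k _ => by rw [fiberCard_redirect_of_ne i comp k.2]
  rw [Fintype.prod_eq_mul_prod_subtype_ne _ i, others, fiberCard_redirect_self,
    Fintype.prod_eq_mul_prod_subtype_ne _ j,
    Fintype.prod_eq_mul_prod_subtype_ne (fun k : {k // k ≠ j} => (fiberCard comp k : ℚ)) i]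
  push_cast
  field_simp
  ring

end Labels

namespace Multigraph

variable {V E ι : Type*} {G : Multigraph V E} {S T M : Set E} {e : E} {a b u v w : V}

theorem Reach.symm (h : G.Reach T a b) : G.Reach T b a :=
  (G.contractSetoid T).symm h

theorem Reach.mono (hST : S ⊆ T) (h : G.Reach S a b) : G.Reach T a b :=
  Relation.ReflTransGen.mono (fun _ _ ⟨f, hf, hinc⟩ => ⟨f, hST hf, hinc⟩) _ _ h

theorem reach_of_mem (he : e ∈ T) (huv : G.inc e = s(u, v)) : G.Reach T u v :=
  .single ⟨e, he, huv⟩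

theorem exists_inc_eq (G : Multigraph V E) (e : E) : ∃ u v, G.inc e = s(u, v) :=
  Sym2.exists.1 ⟨G.inc e, rfl⟩

theorem reach_insert_iff (huv : G.inc e = s(u, v)) :
    G.Reach (insert e T) a b ↔
      G.Reach T a b ∨ G.Reach T a u ∧ G.Reach T v b ∨ G.Reach T a v ∧ G.Reach T u b := by
  have grow {x y : V} : G.Reach T x y → G.Reach (insert e T) x y :=
    Reach.mono (Set.subset_insert e T)
  have cross : G.Reach (insert e T) u v := reach_of_mem (Set.mem_insert e T) huv
  constructor
  · intro h
    induction h with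
    | refl => exact .inl .refl
    | @tail x y _ hxy ih =>
      obtain ⟨f, rfl | hf, hinc⟩ := hxy
      · have hu : G.Reach T u u := .refl
        have hv : G.Reach T v v := .refl
        rcases Sym2.eq_iff.1 (huv.symm.trans hinc) with ⟨rfl, rfl⟩ | ⟨rfl, rfl⟩ <;> tauto
      · have extend {z : V} (hz : G.Reach T z x) : G.Reach T z y := hz.tail ⟨f, hf, hinc⟩
        exact ih.imp extend (Or.imp (And.imp_right extend) (And.imp_right extend))
  · rintro (h | ⟨hau, hvb⟩ | ⟨hav, hub⟩)
    · exact grow h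
    · exact ((grow hau).trans cross).trans (grow hvb)
    · exact ((grow hav).trans cross.symm).trans (grow hub)

theorem reach_insert_iff_of_reach (huv : G.inc e = s(u, v)) (h : G.Reach T u v) :
    G.Reach (insert e T) a b ↔ G.Reach T a b := by
  rw [reach_insert_iff huv, or_iff_left_iff_imp]
  rintro (⟨hau, hvb⟩ | ⟨hav, hub⟩)
  · exact (hau.trans h).trans hvb
  · exact (hav.trans h.symm).trans hub

theorem IsForest.subset (hT : G.IsForest T) (hST : S ⊆ T) : G.IsForest S := fun f hf =>
  ⟨(hT f (hST hf)).1, fun x y hxy h =>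
    (hT f (hST hf)).2 x y hxy (h.mono (Set.sdiff_subset_sdiff_left hST))⟩

theorem IsForest.not_reach_of_notMem (hT : G.IsForest T) (hMT : M ⊆ T) (heT : e ∈ T) (heM : e ∉ M)
    (huv : G.inc e = s(u, v)) : ¬ G.Reach M u v := fun h =>
  (hT e heT).2 u v huv (h.mono (Set.subset_sdiff_singleton hMT heM))

/-- `comp` labels the components of `G⟨T⟩` by the elements of `ι`, every label being used. -/
structure IsComponentLabelling (G : Multigraph V E) (T : Set E) (comp : V → ι) : Prop where
  surjective : Function.Surjective comp
  eq_iff_reach : ∀ u v, comp u = comp v ↔ G.Reach T u v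

/-- The number of components of `G⟨T⟩`, isolated vertices included. -/
noncomputable def numComponents (G : Multigraph V E) (T : Set E) : ℕ :=
  Nat.card (Quotient (G.contractSetoid T))

theorem isComponentLabelling_mk (G : Multigraph V E) (T : Set E) :
    G.IsComponentLabelling T (Quotient.mk (G.contractSetoid T)) :=
  ⟨Quotient.mk_surjective, fun _ _ => Quotient.eq⟩

namespace IsComponentLabelling

variable {comp : V → ι}

theorem card_eq (h : G.IsComponentLabelling T comp) : Nat.card ι = G.numComponents T := by
  have hker : G.contractSetoid T = Setoid.ker comp :=
    Setoid.ext fun u v => (h.eq_iff_reach u v).symm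
  rw [numComponents, hker]
  exact (Nat.card_congr (Setoid.quotientKerEquivOfSurjective comp h.surjective)).symm

theorem insert_of_reach (h : G.IsComponentLabelling T comp) (huv : G.inc e = s(u, v))
    (hreach : G.Reach T u v) :
    G.IsComponentLabelling (insert e T) comp :=
  ⟨h.surjective, fun x y => by
    rw [reach_insert_iff_of_reach huv hreach, h.eq_iff_reach]⟩

theorem insert_of_ne [DecidableEq ι] (h : G.IsComponentLabelling T comp)
    (huv : G.inc e = s(u, v)) (hne : comp u ≠ comp v) :
    G.IsComponentLabelling (insert e T) (redirect ⟨comp u, hne⟩ ∘ comp) := by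
  refine ⟨fun k => ?_, fun x y => ?_⟩
  · obtain ⟨w, hw⟩ := h.surjective k
    exact ⟨w, by rw [Function.comp_apply, hw, redirect_coe]⟩
  · rw [reach_insert_iff huv]
    simp only [← h.eq_iff_reach, Function.comp_apply, redirect]
    split_ifs <;> grind

end IsComponentLabelling

theorem numComponents_empty (G : Multigraph V E) : G.numComponents ∅ = Nat.card V := by
  refine (IsComponentLabelling.card_eq ⟨Function.surjective_id, fun u v => ?_⟩).symm
  refine ⟨fun (huv : u = v) => huv ▸ .refl, fun h => ?_⟩
  obtain rfl | ⟨_, ⟨_, hmem, _⟩, _⟩ := h.cases_head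
  exacts [rfl, hmem.elim]

theorem numComponents_insert_of_reach (huv : G.inc e = s(u, v)) (h : G.Reach T u v) :
    G.numComponents (insert e T) = G.numComponents T :=
  ((G.isComponentLabelling_mk T).insert_of_reach huv h).card_eq.symm

theorem numComponents_insert_of_not_reach [Finite V] (huv : G.inc e = s(u, v))
    (h : ¬ G.Reach T u v) : G.numComponents (insert e T) + 1 = G.numComponents T := by
  classical
  have hmk := G.isComponentLabelling_mk T
  have hne := mt (hmk.eq_iff_reach u v).1 h
  rw [← (hmk.insert_of_ne huv hne).card_eq, card_subtype_ne_add_one, numComponents]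

theorem ConnectedOn.numComponents_le_one [Finite V] (h : G.ConnectedOn T) :
    G.numComponents T ≤ 1 :=
  Finite.card_le_one_iff_subsingleton.2
    ⟨Quotient.ind₂ fun u v => Quotient.sound (h u v)⟩

theorem card_le_ncard_add_numComponents [Finite V] (hT : T.Finite) :
    Nat.card V ≤ T.ncard + G.numComponents T := by
  induction T, hT using Set.Finite.induction_on with
  | empty => rw [numComponents_empty, Set.ncard_empty, zero_add]
  | @insert e T heT hT ih =>
    obtain ⟨u, v, huv⟩ := G.exists_inc_eq e
    rw [Set.ncard_insert_of_notMem heT hT]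
    by_cases h : G.Reach T u v
    · have := numComponents_insert_of_reach huv h
      lia
    · have := numComponents_insert_of_not_reach huv h
      lia

theorem IsForest.ncard_add_numComponents [Finite V] (hF : G.IsForest T) (hT : T.Finite) :
    T.ncard + G.numComponents T = Nat.card V := by
  induction T, hT using Set.Finite.induction_on with
  | empty => rw [numComponents_empty, Set.ncard_empty, zero_add]
  | @insert e T heT hT ih =>
    obtain ⟨u, v, huv⟩ := G.exists_inc_eq e
    have hT' := ih (hF.subset (Set.subset_insert e T))
    have hnot : ¬ G.Reach T u v :=
      hF.not_reach_of_notMem (Set.subset_insert e T) (Set.mem_insert e T) heT huv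
    have := numComponents_insert_of_not_reach huv hnot
    rw [Set.ncard_insert_of_notMem heT hT]
    lia

theorem IsSpanningTree.isForest [Finite V] (h : G.IsSpanningTree T) (hT : T.Finite) :
    G.IsForest T := by
  intro e heT
  have bridge (u v : V) (huv : G.inc e = s(u, v)) : ¬ G.Reach (T \ {e}) u v := by
    intro hreach
    have hle := card_le_ncard_add_numComponents (G := G) (hT.sdiff (t := {e}))
    have hone := h.1.numComponents_le_one
    rw [← Set.insert_sdiff_self_of_mem heT, numComponents_insert_of_reach huv hreach] at hone
    have hcard := h.2
    have hdiff := Set.ncard_sdiff_singleton_add_one heT hT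
    lia
  obtain ⟨u, v, huv⟩ := G.exists_inc_eq e
  refine ⟨fun hdiag => ?_, bridge⟩
  rw [huv, Sym2.mk_isDiag_iff] at hdiag
  exact bridge u v huv (hdiag ▸ .refl)

/-- The edges of `G` joining different components of `G⟨M⟩`. -/
def crossingEdges (G : Multigraph V E) (M : Set E) : Set E :=
  {e | ∃ u v, G.inc e = s(u, v) ∧ ¬ G.Reach M u v}

theorem notMem_of_mem_crossingEdges (he : e ∈ G.crossingEdges M) : e ∉ M := by
  obtain ⟨u, v, huv, hnot⟩ := he
  exact fun heM => hnot (reach_of_mem heM huv)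

theorem inter_crossingEdges_of_mem_ST [Finite V] [Finite E] (hT : T ∈ G.ST M) :
    T ∩ G.crossingEdges M = T \ M := by
  ext e
  refine and_congr_right fun heT => ⟨notMem_of_mem_crossingEdges, fun heM => ?_⟩
  obtain ⟨u, v, huv⟩ := G.exists_inc_eq e
  exact ⟨u, v, huv, (hT.1.isForest T.toFinite).not_reach_of_notMem hT.2 heT heM huv⟩

theorem ncard_inter_crossingEdges_of_mem_ST [Finite V] [Finite E] {k : ℕ}
    (hk : M.ncard + k + 1 = Nat.card V) (hT : T ∈ G.ST M) :
    (T ∩ G.crossingEdges M).ncard = k := by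
  have hdiff := Set.ncard_sdiff_add_ncard_of_subset hT.2 T.toFinite
  have hcard := hT.1.2
  rw [inter_crossingEdges_of_mem_ST hT]
  lia

theorem ST_insert (G : Multigraph V E) (e : E) (M : Set E) :
    G.ST (insert e M) = {T ∈ G.ST M | e ∈ T} := by
  ext T
  simp only [ST, Set.insert_subset_iff, Set.mem_ofPred_eq]
  tauto

open scoped Classical in
theorem tau_mul_eq_sum_tau_insert [Finite V] [Fintype E] {k : ℕ}
    (hk : M.ncard + k + 1 = Nat.card V) :
    G.tau M * k = ∑ e with e ∈ G.crossingEdges M, G.tau (insert e M) := by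
  have edges_per_tree : ∀ T ∈ (G.ST M).toFinset,
      (Finset.bipartiteAbove (fun T e => e ∈ T) {e | e ∈ G.crossingEdges M} T).card = k := by
    intro T hT
    rw [← ncard_inter_crossingEdges_of_mem_ST hk (Set.mem_toFinset.1 hT),
      Set.ncard_eq_toFinset_card']
    congr 1
    ext e
    simp [and_comm]
  have trees_per_edge : ∀ e,
      (Finset.bipartiteBelow (fun T e => e ∈ T) (G.ST M).toFinset e).card =
        G.tau (insert e M) := by
    intro e
    rw [tau, ST_insert, Set.ncard_eq_toFinset_card']
    congr 1
    ext T
    simp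
  calc G.tau M * k = ∑ _T ∈ (G.ST M).toFinset, k := by
        rw [Finset.sum_const, smul_eq_mul, tau, Set.ncard_eq_toFinset_card']
    _ = ∑ T ∈ (G.ST M).toFinset,
          (Finset.bipartiteAbove (fun T e => e ∈ T) {e | e ∈ G.crossingEdges M} T).card :=
        (Finset.sum_congr rfl edges_per_tree).symm
    _ = ∑ e with e ∈ G.crossingEdges M, G.tau (insert e M) := by
        rw [Finset.sum_card_bipartiteAbove_eq_sum_card_bipartiteBelow]
        exact Finset.sum_congr rfl fun e _ => trees_per_edge e

theorem tau_eq_one_of_isSpanningTree [Finite E] (h : G.IsSpanningTree M) : G.tau M = 1 := by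
  have hsingle : G.ST M = {M} := by
    refine Set.eq_singleton_iff_unique_mem.2 ⟨⟨h, subset_rfl⟩, fun T hT => ?_⟩
    exact (Set.eq_of_subset_of_ncard_le hT.2 (by have := h.2; have := hT.1.2; lia)).symm
  rw [tau, hsingle, Set.ncard_singleton]

theorem IsClique.inc_injective (hG : G.IsClique Set.univ) : Function.Injective G.inc := by
  intro e f hef
  obtain ⟨u, v, huv⟩ := G.exists_inc_eq e
  have hne : u ≠ v := fun h =>
    hG.2 e (fun _ _ => trivial) (huv ▸ Sym2.mk_isDiag_iff.2 h)
  exact (hG.1 u trivial v trivial hne).unique huv (hef ▸ huv)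

theorem IsClique.finite_edges [Finite V] (hG : G.IsClique Set.univ) : Finite E :=
  .of_injective G.inc hG.inc_injective

variable {comp : V → ι}

theorem IsClique.image_inc_crossingEdges (hG : G.IsClique Set.univ)
    (h : G.IsComponentLabelling M comp) (w : V) :
    G.inc '' {e ∈ G.crossingEdges M | w ∈ G.inc e} = (s(w, ·)) '' {v | comp v ≠ comp w} := by
  ext p
  constructor
  · rintro ⟨e, ⟨⟨u, v, huv, hnot⟩, hw⟩, rfl⟩
    rw [← h.eq_iff_reach] at hnot
    rw [huv] at hw ⊢
    obtain rfl | rfl := Sym2.mem_iff.1 hw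
    · exact ⟨v, Ne.symm hnot, rfl⟩
    · exact ⟨u, hnot, Sym2.eq_swap⟩
  · rintro ⟨v, hne, rfl⟩
    obtain ⟨e, he, -⟩ := hG.1 w trivial v trivial fun hwv => hne (hwv ▸ rfl)
    refine ⟨e, ⟨⟨w, v, he, fun hreach => hne ((h.eq_iff_reach w v).2 hreach).symm⟩, ?_⟩, he⟩
    exact he ▸ Sym2.mem_mk_left w v

theorem IsClique.ncard_crossingEdges_mem_add_fiberCard [Finite V] (hG : G.IsClique Set.univ)
    (h : G.IsComponentLabelling M comp) (w : V) :
    {e ∈ G.crossingEdges M | w ∈ G.inc e}.ncard + fiberCard comp (comp w) = Nat.card V := by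
  rw [← ncard_ne_add_fiberCard comp (comp w), ← Set.ncard_image_of_injective _ hG.inc_injective,
    hG.image_inc_crossingEdges h w,
    Set.ncard_image_of_injective _ fun _ _ => Sym2.congr_right.1]

open scoped Classical in
theorem IsClique.sum_crossingEdges_inv_fiberCard [Fintype V] [Fintype E] [Fintype ι]
    (hG : G.IsClique Set.univ) (h : G.IsComponentLabelling M comp) :
    ∑ e with e ∈ G.crossingEdges M, ∑ w with w ∈ G.inc e, (fiberCard comp (comp w) : ℚ)⁻¹ =
      Nat.card V * (Fintype.card ι - 1) := by
  have at_vertex (w : V) : ∑ e with e ∈ G.crossingEdges M ∧ w ∈ G.inc e,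
      (fiberCard comp (comp w) : ℚ)⁻¹ = Nat.card V * (fiberCard comp (comp w) : ℚ)⁻¹ - 1 := by
    have hpos := fiberCard_apply_pos comp w
    rw [Finset.sum_const, nsmul_eq_mul, ← hG.ncard_crossingEdges_mem_add_fiberCard h w,
      Set.ncard_eq_toFinset_card', Set.toFinset_ofPred]
    push_cast
    field_simp
    ring
  calc _ = ∑ w, ∑ e with e ∈ G.crossingEdges M ∧ w ∈ G.inc e,
          (fiberCard comp (comp w) : ℚ)⁻¹ :=
        Finset.sum_comm' fun e w => by simp
    _ = ∑ w, (Nat.card V * (fiberCard comp (comp w) : ℚ)⁻¹ - 1) :=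
        Finset.sum_congr rfl fun w _ => at_vertex w
    _ = Nat.card V * (Fintype.card ι - 1) := by
        rw [Finset.sum_sub_distrib, ← Finset.mul_sum, sum_inv_fiberCard h.surjective,
          Finset.sum_const, Finset.card_univ, Nat.card_eq_fintype_card, nsmul_one]
        ring

open scoped Classical in
theorem prod_fiberCard_redirect_of_inc_eq [Fintype V] [Fintype ι]
    (huv : G.inc e = s(u, v)) (hne : comp u ≠ comp v) :
    ∏ k, (fiberCard (redirect ⟨comp u, hne⟩ ∘ comp) k : ℚ) =
      (∏ k, (fiberCard comp k : ℚ)) * ∑ w with w ∈ G.inc e, (fiberCard comp (comp w) : ℚ)⁻¹ := by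
  have hends : Finset.univ.filter (· ∈ G.inc e) = {u, v} := by
    ext w
    simp [huv]
  rw [hends, Finset.sum_pair fun h => hne (congrArg comp h)]
  exact prod_fiberCard_redirect _ comp (fiberCard_apply_pos comp u).ne'
    (fiberCard_apply_pos comp v).ne'

open scoped Classical in
theorem IsClique.tau_eq_of_forall_tau_insert [Fintype V] [Fintype ι] (hG : G.IsClique Set.univ)
    (h : G.IsComponentLabelling M comp) (hM : M.ncard + Fintype.card ι = Nat.card V)
    (hι : 1 < Fintype.card ι) {C : ℚ}
    (hC : ∀ e ∈ G.crossingEdges M, (G.tau (insert e M) : ℚ) =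
      C * ∑ w with w ∈ G.inc e, (fiberCard comp (comp w) : ℚ)⁻¹) :
    (G.tau M : ℚ) = C * Nat.card V := by
  have := hG.finite_edges
  have := Fintype.ofFinite E
  obtain ⟨k, hk⟩ := Nat.exists_eq_add_of_lt hι
  have hcount := tau_mul_eq_sum_tau_insert (G := G) (M := M) (k := k + 1) (by lia)
  refine mul_right_cancel₀ (Nat.cast_add_one_ne_zero k) ?_
  calc (G.tau M : ℚ) * (k + 1)
      = ∑ e with e ∈ G.crossingEdges M, (G.tau (insert e M) : ℚ) := by exact_mod_cast hcount
    _ = C * (Nat.card V * (Fintype.card ι - 1)) := by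
        rw [Finset.sum_congr rfl fun e he => hC e (Finset.mem_filter.1 he).2, ← Finset.mul_sum,
          hG.sum_crossingEdges_inv_fiberCard h]
    _ = C * Nat.card V * (k + 1) := by
        rw [hk]
        push_cast
        ring

theorem tau_eq_one_of_card_eq_one [Finite E] [Fintype ι] (h : G.IsComponentLabelling M comp)
    (hM : M.ncard + Fintype.card ι = Nat.card V) (hι : Fintype.card ι = 1) : G.tau M = 1 := by
  have := Fintype.card_le_one_iff_subsingleton.1 hι.le
  exact tau_eq_one_of_isSpanningTree
    ⟨fun u v => (h.eq_iff_reach u v).1 (Subsingleton.elim _ _), hι ▸ hM⟩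

theorem IsClique.tau_eq_of_ncard_add_card [Finite V] [Nonempty V] (hG : G.IsClique Set.univ)
    [Fintype ι] (h : G.IsComponentLabelling M comp)
    (hM : M.ncard + Fintype.card ι = Nat.card V) :
    (G.tau M : ℚ) =
      (Nat.card V : ℚ) ^ ((Fintype.card ι : ℤ) - 2) * ∏ i, (fiberCard comp i : ℚ) := by
  classical
  have := hG.finite_edges
  have := Fintype.ofFinite V
  have hV : (Nat.card V : ℚ) ≠ 0 := Nat.cast_ne_zero.2 Nat.card_pos.ne'
  have hpos : 0 < Fintype.card ι := Fintype.card_pos_iff.2 (Nonempty.map comp inferInstance)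
  induction hk : Fintype.card ι, Nat.succ_le_of_lt hpos using Nat.le_induction
    generalizing ι M with
  | base =>
    obtain ⟨i, hi⟩ := Fintype.card_eq_one_iff.1 hk
    have hfiber (j : ι) : fiberCard comp j = Nat.card V := by
      simp [fiberCard, hi, Set.ncard_univ]
    simp [tau_eq_one_of_card_eq_one h hM hk, hfiber, hk]
  | succ c hc ih =>
    have tau_insert : ∀ e ∈ G.crossingEdges M, (G.tau (insert e M) : ℚ) =
        (Nat.card V : ℚ) ^ ((c : ℤ) - 2) * (∏ i, (fiberCard comp i : ℚ)) *
          ∑ w with w ∈ G.inc e, (fiberCard comp (comp w) : ℚ)⁻¹ := by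
      intro e he
      have heM := Set.ncard_insert_of_notMem (notMem_of_mem_crossingEdges he)
      obtain ⟨u, v, huv, hnot⟩ := he
      have hne := mt (h.eq_iff_reach u v).1 hnot
      have hcard := card_subtype_ne_add_one (comp v)
      rw [Nat.card_eq_fintype_card, Nat.card_eq_fintype_card] at hcard
      rw [ih (h.insert_of_ne huv hne) (by lia) (by lia) (by lia),
        prod_fiberCard_redirect_of_inc_eq huv hne, mul_assoc]
    rw [hG.tau_eq_of_forall_tau_insert h hM (by lia) tau_insert, mul_right_comm,
      ← zpow_add_one₀ hV]
    congr 2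
    lia

end Multigraph

theorem completeGraph_isClique_univ (n : ℕ) : (completeGraph n).IsClique Set.univ :=
  ⟨fun u _ v _ huv => ⟨⟨s(u, v), huv⟩, rfl, fun _ hf => Subtype.ext hf⟩, fun e _ => e.2⟩

theorem tau_completeGraph_of_forest_general {V E ι : Type*} [Finite V] [Nonempty V] [Fintype ι]
    {G : Multigraph V E} (hG : G.IsClique Set.univ) {M : Set E} (hM : G.IsForest M)
    {comp : V → ι} (hcomp : G.IsComponentLabelling M comp) :
    (G.tau M : ℚ) =
      (Nat.card V : ℚ) ^ ((Fintype.card ι : ℤ) - 2) * ∏ i, (fiberCard comp i : ℚ) := by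
  have := hG.finite_edges
  refine hG.tau_eq_of_ncard_add_card hcomp ?_
  rw [← Nat.card_eq_fintype_card, hcomp.card_eq, hM.ncard_add_numComponents M.toFinite]

/-- Lovász, Moon: if `M` spans a forest with `c` components of
orders `n₁, …, n_c` in `K_n`, then `τ_{K_n}(M) = n^{c-2} ∏ᵢ nᵢ`. -/
theorem tau_completeGraph_of_forest (n c : ℕ) (hn : 1 ≤ n)
    (M : Set {p : Sym2 (Fin n) // ¬ p.IsDiag})
    (hforest : (completeGraph n).IsForest M)
    (comp : Fin n → Fin c) (hsurj : Function.Surjective comp)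
    (hcomp : ∀ u v : Fin n, comp u = comp v ↔ (completeGraph n).Reach M u v)
    (sizes : Fin c → ℕ)
    (hsizes : ∀ i, sizes i = {v : Fin n | comp v = i}.ncard) :
    ((completeGraph n).tau M : ℚ) =
      (n : ℚ) ^ ((c : ℤ) - 2) * ∏ i : Fin c, (sizes i : ℚ) := by
  have : Nonempty (Fin n) := Fin.pos_iff_nonempty.1 hn
  simpa [fiberCard, hsizes] using
    tau_completeGraph_of_forest_general (completeGraph_isClique_univ n) hforest ⟨hsurj, hcomp⟩

end PaperST
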